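/- arXiv:2104.01274 — 2 statements merged into one kernel-verified Lean document; each statement's English description precedes it below -/
import Mathlib

section
/- Let a, b, c, d be positive integers with a > b and let A be the matrix with rows (a, −b) and (c, −d), and suppose A ∈ SL(2,ℤ). If q_1,…,q_k are integers with q_i ≥ 2 for i ∈ {2,…,k} and a/c = [[q_1,…,q_k]], then A = ε·M(q_1,…,q_k) for some ε ∈ {1,−1}. -/
/-- The continuant matrix `M(c)` for an integer `c`. -/
def M (c : ℤ) : Matrix (Fin 2) (Fin 2) ℤ := !![c, -1; 1, 0]

/-- `M(c₁,…,cₙ) := M(c₁)·…·M(cₙ)`. -/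
def Mseq (l : List ℤ) : Matrix (Fin 2) (Fin 2) ℤ := (l.map M).prod

/-- The negative continued fraction `[[q₁,…,q_k]]` of a list of integers,
defined by `[[q_k]] = q_k` and `[[q_i,…,q_k]] = q_i − 1/[[q_{i+1},…,q_k]]`. -/
def ncf : List ℤ → ℚ
  | [] => 0
  | [q] => (q : ℚ)
  | q :: l => (q : ℚ) - 1 / ncf l

/-!
The fraction `[[q₁, …, q_k]]` is the quotient of the entries of the first column of `M(q₁, …, q_k)`.
Both this column and `(a, c)` are primitive with positive second entry, so they are equal, and two
integer matrices with equal determinant and the same primitive first column have second columns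
differing by a multiple of it. This multiple is zero once the negatives of both lower right entries
lie in `[0, c)`. For `d` this follows from `a * d < b * c < a * c`. For `M(q₁, …, q_k)` one uses the
cone `0 ≤ v₀`, `v₁ ≤ v₀`, which `M(r)` preserves for `r ≥ 2` without decreasing `v₀`, and applies
`M(q₂, …, q_k)` to its elements `(0, -1)` and `(1, 1)`. The sign `ε` is always `1`.
-/

open scoped Matrix

theorem mseq_cons (q : ℤ) (l : List ℤ) : Mseq (q :: l) = M q * Mseq l := by
  simp only [Mseq, List.map_cons, List.prod_cons]

theorem det_mseq (l : List ℤ) : (Mseq l).det = 1 := by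
  induction l with
  | nil => simp [Mseq]
  | cons q l ih => rw [mseq_cons, Matrix.det_mul, ih, M, Matrix.det_fin_two_of]; norm_num

theorem mseq_cons_zero_apply (q : ℤ) (l : List ℤ) (j : Fin 2) :
    Mseq (q :: l) 0 j = q * Mseq l 0 j - Mseq l 1 j := by
  simp [mseq_cons, M, Matrix.mul_apply, sub_eq_add_neg]

theorem mseq_cons_one_apply (q : ℤ) (l : List ℤ) (j : Fin 2) :
    Mseq (q :: l) 1 j = Mseq l 0 j := by
  simp [mseq_cons, M, Matrix.mul_apply]

theorem mseq_cons_mulVec (q : ℤ) (l : List ℤ) (v : Fin 2 → ℤ) :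
    Mseq (q :: l) *ᵥ v = ![q * (Mseq l *ᵥ v) 0 - (Mseq l *ᵥ v) 1, (Mseq l *ᵥ v) 0] := by
  rw [mseq_cons, ← Matrix.mulVec_mulVec]
  generalize Mseq l *ᵥ v = w
  ext i
  fin_cases i <;> simp [M, Matrix.mulVec, dotProduct, sub_eq_add_neg]

theorem mseq_mulVec_one_le_and_le_mseq_mulVec_zero {l : List ℤ} (hl : ∀ r ∈ l, 2 ≤ r)
    {v : Fin 2 → ℤ} (hv₀ : 0 ≤ v 0) (hv₁ : v 1 ≤ v 0) :
    (Mseq l *ᵥ v) 1 ≤ (Mseq l *ᵥ v) 0 ∧ v 0 ≤ (Mseq l *ᵥ v) 0 := by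
  induction l with
  | nil => simpa [Mseq] using hv₁
  | cons r l ih =>
    obtain ⟨hr, hl⟩ := List.forall_mem_cons.mp hl
    rw [mseq_cons_mulVec]
    obtain ⟨hcone, hgrow⟩ := ih hl
    set w := Mseq l *ᵥ v
    have hw₀ : 0 ≤ w 0 := hv₀.trans hgrow
    have htwo : 2 * w 0 ≤ r * w 0 := by gcongr
    have hstep : w 0 ≤ r * w 0 - w 1 := by linarith
    exact ⟨hstep, hgrow.trans hstep⟩

theorem mseq_zero_zero_pos {l : List ℤ} (hl : ∀ r ∈ l, 2 ≤ r) : 0 < Mseq l 0 0 := by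
  have hone : 1 ≤ Mseq l 0 0 := by
    simpa [Matrix.mulVec, dotProduct] using
      (mseq_mulVec_one_le_and_le_mseq_mulVec_zero hl (v := ![1, 0]) (by simp) (by simp)).2
  exact one_pos.trans_le hone

theorem neg_mseq_zero_one_mem_Ico {l : List ℤ} (hl : ∀ r ∈ l, 2 ≤ r) :
    -Mseq l 0 1 ∈ Set.Ico 0 (Mseq l 0 0) := by
  have hnonneg : 0 ≤ -Mseq l 0 1 := by
    simpa [Matrix.mulVec, dotProduct] using
      (mseq_mulVec_one_le_and_le_mseq_mulVec_zero hl (v := ![0, -1]) (by simp) (by simp)).2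
  have hone : 1 ≤ Mseq l 0 0 + Mseq l 0 1 := by
    simpa [Matrix.mulVec, dotProduct] using
      (mseq_mulVec_one_le_and_le_mseq_mulVec_zero hl (v := ![1, 1]) (by simp) (by simp)).2
  exact ⟨hnonneg, by linarith⟩

-- At `l = []`, both here and in `ncf_eq_div`, this relies on the convention `x / 0 = 0`.
theorem ncf_cons (q : ℤ) (l : List ℤ) : ncf (q :: l) = (q : ℚ) - 1 / ncf l := by
  cases l with
  | nil => simp [ncf]
  | cons r l => rfl

theorem ncf_eq_div {l : List ℤ} (hl : ∀ r ∈ l.tail, 2 ≤ r) :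
    ncf l = (Mseq l 0 0 : ℚ) / (Mseq l 1 0 : ℚ) := by
  induction l with
  | nil => simp [ncf, Mseq]
  | cons q l ih =>
    have hne : (Mseq l 0 0 : ℚ) ≠ 0 := mod_cast (mseq_zero_zero_pos hl).ne'
    rw [ncf_cons, ih fun r hr => hl r (List.mem_of_mem_tail hr), one_div_div,
      mseq_cons_zero_apply, mseq_cons_one_apply]
    push_cast
    field_simp

theorem isCoprime_col_zero_of_det_eq_one {R : Type*} [CommRing R] {A : Matrix (Fin 2) (Fin 2) R}
    (hA : A.det = 1) : IsCoprime (A 0 0) (A 1 0) :=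
  Matrix.SpecialLinearGroup.isCoprime_col ⟨A, hA⟩ 0

theorem eq_of_col_zero_eq_of_abs_sub_lt {A B : Matrix (Fin 2) (Fin 2) ℤ}
    (hcop : IsCoprime (A 0 0) (A 1 0)) (hdet : A.det = B.det) (h₀ : A 0 0 = B 0 0)
    (h₁ : A 1 0 = B 1 0) (hlt : |A 1 1 - B 1 1| < A 1 0) : A = B := by
  have hcross : A 0 0 * (A 1 1 - B 1 1) = (A 0 1 - B 0 1) * A 1 0 := by
    rw [Matrix.det_fin_two, Matrix.det_fin_two, ← h₀, ← h₁] at hdet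
    linear_combination hdet
  have hdvd : A 1 0 ∣ A 1 1 - B 1 1 :=
    hcop.symm.dvd_of_dvd_mul_left (Dvd.intro_left _ hcross.symm)
  have h₁₁ : A 1 1 - B 1 1 = 0 := Int.eq_zero_of_abs_lt_dvd hdvd hlt
  have h₀₁ : A 0 1 - B 0 1 = 0 := by
    have hne : A 1 0 ≠ 0 := ((abs_nonneg _).trans_lt hlt).ne'
    simpa [h₁₁, hne] using hcross.symm
  ext i j
  fin_cases i <;> fin_cases j
  exacts [h₀, sub_eq_zero.mp h₀₁, h₁, sub_eq_zero.mp h₁₁]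

theorem forall_mem_tail_of_forall_getD {α : Type*} {p : α → Prop} {l : List α} {x : α}
    (h : ∀ i, 1 ≤ i → i < l.length → p (l.getD i x)) : ∀ r ∈ l.tail, p r := by
  intro r hr
  obtain ⟨i, hi, rfl⟩ := List.mem_iff_getElem.mp hr
  rw [List.length_tail] at hi
  have hi' : i + 1 < l.length := by omega
  simpa [hi'] using h (i + 1) (by omega) hi'

theorem presentation_of_neg_cols_general {a b c d : ℤ} (hc : 0 < c) (hd : 0 ≤ d) (hdc : d < c)
    (hdet : b * c - a * d = 1) {q : List ℤ} (hq : q ≠ []) (hq2 : ∀ r ∈ q.tail, 2 ≤ r)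
    (hncf : ncf q = (a : ℚ) / (c : ℚ)) : !![a, -b; c, -d] = Mseq q := by
  have hA : (!![a, -b; c, -d] : Matrix (Fin 2) (Fin 2) ℤ).det = 1 := by
    rw [Matrix.det_fin_two_of]
    linear_combination hdet
  have hcop : IsCoprime a c := isCoprime_col_zero_of_det_eq_one hA
  obtain ⟨r, l, rfl⟩ := List.exists_cons_of_ne_nil hq
  have hpos : 0 < Mseq (r :: l) 1 0 := by
    rw [mseq_cons_one_apply]
    exact mseq_zero_zero_pos hq2
  obtain ⟨h₀, h₁⟩ : a = Mseq (r :: l) 0 0 ∧ c = Mseq (r :: l) 1 0 :=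
    Rat.div_int_inj hc hpos (Int.isCoprime_iff_gcd_eq_one.mp hcop)
      (Int.isCoprime_iff_gcd_eq_one.mp (isCoprime_col_zero_of_det_eq_one (det_mseq _)))
      (hncf.symm.trans (ncf_eq_div hq2))
  have hIco : -Mseq (r :: l) 1 1 ∈ Set.Ico 0 c := by
    rw [h₁, mseq_cons_one_apply, mseq_cons_one_apply]
    exact neg_mseq_zero_one_mem_Ico hq2
  have hlt : |-d - Mseq (r :: l) 1 1| < c :=
    abs_lt.mpr ⟨by linarith [hIco.1], by linarith [hIco.2]⟩
  exact eq_of_col_zero_eq_of_abs_sub_lt hcop (hA.trans (det_mseq _).symm) h₀ h₁ hlt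

/-- Let `a, b, c, d` be positive integers with `a > b` and suppose the matrix
`A = !![a, -b; c, -d]` has determinant `1` (i.e. `b·c − a·d = 1`). If `q₁,…,q_k` are
integers with `qᵢ ≥ 2` for `i ∈ {2,…,k}` and `a/c = [[q₁,…,q_k]]`, then
`A = ε·M(q₁,…,q_k)` for some `ε ∈ {1,−1}`. -/
theorem presentation_of_neg_cols (a b c d : ℤ)
    (ha : 0 < a) (hb : 0 < b) (hc : 0 < c) (hd : 0 < d) (hab : b < a)
    (hdet : b * c - a * d = 1)
    (q : List ℤ) (hq : q ≠ [])
    (hq2 : ∀ i, 1 ≤ i → i < q.length → 2 ≤ q.getD i 0)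
    (hncf : ncf q = (a : ℚ) / (c : ℚ)) :
    ∃ ε : ℤ, (ε = 1 ∨ ε = -1) ∧ !![a, -b; c, -d] = ε • Mseq q := by
  have had : a * d < b * c := by linarith
  have hdc : d < c := lt_of_mul_lt_mul_left (had.trans (mul_lt_mul_of_pos_right hab hc)) ha.le
  exact ⟨1, .inl rfl, (presentation_of_neg_cols_general hc hd.le hdc hdet hq
    (forall_mem_tail_of_forall_getD hq2) hncf).trans (one_smul ℤ _).symm⟩
end

section
/- Let A ∈ SL(2,ℤ). Then there exists exactly one finite sequence of integers (c_1,…,c_n) such that: (i) M(c_1,…,c_n) = ε·A for some ε ∈ {1,−1}; (ii) n is minimal, i.e. for every sequence (d_1,…,d_m) of integers with M(d_1,…,d_m) = ε'·A for some ε' ∈ {1,−1}, one has m ≥ n; and (iii) c_i ∉ {−2, −1, 0, 1} for all i with 2 ≤ i ≤ n−1. -/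
open scoped goldenRatio

/-- Equality up to sign, written `x =± y`: the relation between `M(c₁,…,cₙ)` and `A` when
`(c₁,…,cₙ)` is a presentation of `A` up to sign. -/
def EqUpToSign {α : Type*} [Neg α] (x y : α) : Prop := x = y ∨ x = -y

local infix:50 " =± " => EqUpToSign

namespace EqUpToSign

variable {α : Type*}

lemma symm [InvolutiveNeg α] {x y : α} (h : x =± y) : y =± x :=
  h.imp Eq.symm fun h => by rw [h, neg_neg]

lemma trans [InvolutiveNeg α] {x y z : α} (hxy : x =± y) (hyz : y =± z) : x =± z := by
  rcases hxy with rfl | rfl <;> rcases hyz with rfl | rfl <;> simp [EqUpToSign]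

lemma mul [Mul α] [HasDistribNeg α] {x y z w : α} (hxy : x =± y) (hzw : z =± w) :
    x * z =± y * w := by
  rcases hxy with rfl | rfl <;> rcases hzw with rfl | rfl <;> simp [EqUpToSign]

lemma of_mul_left [Mul α] [HasDistribNeg α] {x y z : α} (hz : IsLeftRegular z)
    (h : z * x =± z * y) : x =± y :=
  h.imp (fun h => hz h) fun h => hz (by simpa using h)

lemma iff_exists_smul [AddGroup α] {x y : α} :
    x =± y ↔ ∃ ε : ℤ, (ε = 1 ∨ ε = -1) ∧ x = ε • y := by
  simp [EqUpToSign, or_and_right, exists_or]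

lemma apply_div_apply_eq {m n K : Type*} [DivisionRing K] {A B : Matrix m n ℤ} (h : A =± B)
    (i k : m) (j l : n) : (A i j / A k l : K) = B i j / B k l := by
  rcases h with rfl | rfl <;> simp

end EqUpToSign

section List

variable {α : Type*}

lemma cons_infix_of_infix_tail {l c : List α} (hl : l ≠ []) (h : l <:+: c.tail) :
    ∃ a, a :: l <:+: c := by
  cases c with
  | nil => simp_all
  | cons x c =>
    obtain ⟨s, t, rfl⟩ := h
    obtain ⟨s', a, hs⟩ := List.eq_nil_or_concat (x :: s) |>.resolve_left (by simp)
    exact ⟨a, s', t, by simpa using congrArg (· ++ (l ++ t)) hs.symm⟩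

lemma concat_infix_of_infix_dropLast {l c : List α} (hl : l ≠ [])
    (h : l <:+: c.dropLast) : ∃ b, l ++ [b] <:+: c := by
  have h' : l.reverse <:+: c.reverse.tail := by
    rwa [List.tail_reverse, List.reverse_infix]
  obtain ⟨b, hb⟩ := cons_infix_of_infix_tail (by simpa using hl) h'
  exact ⟨b, List.reverse_infix.1 (by simpa using hb)⟩

lemma cons_concat_infix_of_infix_interior {l c : List α} (hl : l ≠ [])
    (h : l <:+: c.tail.dropLast) : ∃ a b, a :: (l ++ [b]) <:+: c := by
  obtain ⟨b, hb⟩ := concat_infix_of_infix_dropLast hl h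
  obtain ⟨a, ha⟩ := cons_infix_of_infix_tail (by simp) hb
  exact ⟨a, b, ha⟩

lemma forall_getD_iff_forall_mem_interior (c : List α) (d : α) (P : α → Prop) :
    (∀ i, 1 ≤ i → i + 1 < c.length → P (c.getD i d)) ↔ ∀ x ∈ c.tail.dropLast, P x := by
  simp only [List.forall_mem_iff_forall_getElem, List.getElem_dropLast, List.getElem_tail,
    List.length_dropLast, List.length_tail]
  constructor
  · intro h i hi
    rw [← List.getD_eq_getElem _ d]
    exact h (i + 1) (by omega) (by omega)
  · intro h i hi hi'
    obtain ⟨i, rfl⟩ := Nat.exists_eq_add_of_le' hi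
    rw [List.getD_eq_getElem _ _ (by omega)]
    exact h i (by omega)

end List

lemma forall_getD_ne_iff_forall_mem_interior (c : List ℤ) :
    (∀ i, 1 ≤ i → i + 1 < c.length →
      c.getD i 0 ≠ -2 ∧ c.getD i 0 ≠ -1 ∧ c.getD i 0 ≠ 0 ∧ c.getD i 0 ≠ 1) ↔
      ∀ x ∈ c.tail.dropLast, 2 ≤ x ∨ x ≤ -3 := by
  rw [forall_getD_iff_forall_mem_interior c 0 fun x => x ≠ -2 ∧ x ≠ -1 ∧ x ≠ 0 ∧ x ≠ 1]
  exact forall₂_congr fun x _ => by omega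

lemma Mseq_nil : Mseq [] = 1 := by simp [Mseq]

lemma Mseq_cons (c : ℤ) (l : List ℤ) : Mseq (c :: l) = M c * Mseq l := by simp [Mseq]

lemma Mseq_append (l l' : List ℤ) : Mseq (l ++ l') = Mseq l * Mseq l' := by simp [Mseq]

lemma Mseq_cons_zero_apply (c : ℤ) (l : List ℤ) (j : Fin 2) :
    Mseq (c :: l) 0 j = c * Mseq l 0 j - Mseq l 1 j := by
  simp [Mseq_cons, M, Matrix.mul_apply, sub_eq_add_neg]

lemma Mseq_cons_one_apply (c : ℤ) (l : List ℤ) (j : Fin 2) : Mseq (c :: l) 1 j = Mseq l 0 j := by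
  simp [Mseq_cons, M, Matrix.mul_apply]

lemma Mseq_concat_apply_one (l : List ℤ) (b : ℤ) (i : Fin 2) :
    Mseq (l ++ [b]) i 1 = -Mseq l i 0 := by
  simp [Mseq, M, Matrix.mul_apply]

lemma isUnit_Mseq (l : List ℤ) : IsUnit (Mseq l) := by
  refine List.prod_isUnit fun A hA => ?_
  obtain ⟨c, -, rfl⟩ := List.mem_map.1 hA
  simp [Matrix.isUnit_iff_isUnit_det, M, Matrix.det_fin_two]

lemma eq_of_M_eqUpToSign {a b : ℤ} (h : M a =± M b) : a = b := by
  rcases h with h | h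
  · simpa [M] using congr_fun₂ h 0 0
  · simpa [M] using congr_fun₂ h 1 0

lemma Mseq_append_append_eqUpToSign {l l' : List ℤ} (h : Mseq l =± Mseq l') (s t : List ℤ) :
    Mseq (s ++ l ++ t) =± Mseq (s ++ l' ++ t) := by
  simp only [Mseq_append]
  exact (EqUpToSign.mul (.inl rfl) h).mul (.inl rfl)

lemma Mseq_one_mid (a b : ℤ) : Mseq [a, 1, b] = Mseq [a - 1, b - 1] := by
  ext i j
  fin_cases i <;> fin_cases j <;> simp [Mseq, M] <;> ring

lemma Mseq_neg_one_mid (a b : ℤ) : Mseq [a, -1, b] = -Mseq [a + 1, b + 1] := by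
  ext i j
  fin_cases i <;> fin_cases j <;> simp [Mseq, M] <;> ring

lemma Mseq_zero_mid (a b : ℤ) : Mseq [a, 0, b] = -Mseq [a + b] := by
  ext i j
  fin_cases i <;> fin_cases j <;> simp [Mseq, M, add_comm]

lemma Mseq_two_mid (a b : ℤ) : Mseq [a, 2, b] = -Mseq [a - 1, -2, b - 1] := by
  ext i j
  fin_cases i <;> fin_cases j <;> simp [Mseq, M] <;> ring

section ModularGroup

open ModularGroup

lemma Mseq_pair_zero (n : ℤ) : Mseq [n, 0] = -(T ^ n).1 := by
  rw [coe_T_zpow]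
  ext i j
  fin_cases i <;> fin_cases j <;> simp [Mseq, M]

lemma Mseq_singleton_zero : Mseq [0] = S.1 := by
  simp [Mseq, M, S]

lemma coe_S_inv : (S⁻¹).1 = -S.1 := by
  rw [Matrix.SpecialLinearGroup.SL2_inv_expl]
  ext i j
  fin_cases i <;> fin_cases j <;> simp [S]

theorem exists_Mseq_eqUpToSign_coe (g : Matrix.SpecialLinearGroup (Fin 2) ℤ) :
    ∃ l, Mseq l =± g.1 := by
  have mul_left {x y : Matrix.SpecialLinearGroup (Fin 2) ℤ} {k : List ℤ} (hx : Mseq k =± x.1)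
      (hy : ∃ l, Mseq l =± y.1) : ∃ l, Mseq l =± (x * y).1 := by
    obtain ⟨l, hl⟩ := hy
    exact ⟨k ++ l, by simpa [Mseq_append] using hx.mul hl⟩
  have hg : g ∈ Subgroup.closure {S, T} := by simp [SpecialLinearGroup.SL2Z_generators]
  induction hg using Subgroup.closure_induction_left with
  | one => exact ⟨[], .inl (by simp [Mseq_nil])⟩
  | mul_left x hx y _ ih =>
    rcases hx with rfl | rfl
    · exact mul_left (.inl Mseq_singleton_zero) ih
    · exact mul_left (.inr (by simpa using Mseq_pair_zero 1)) ih
  | inv_mul_cancel x hx y _ ih =>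
    rcases hx with rfl | rfl
    · exact mul_left (.inr (by simpa [coe_S_inv] using Mseq_singleton_zero)) ih
    · exact mul_left (.inr (by simpa using Mseq_pair_zero (-1))) ih

end ModularGroup

/-- `c` is a presentation of `A` up to sign of minimal length. -/
structure IsShortestPresentation (c : List ℤ) (A : Matrix (Fin 2) (Fin 2) ℤ) : Prop where
  eqUpToSign : Mseq c =± A
  length_le : ∀ d, Mseq d =± A → c.length ≤ d.length

lemma IsShortestPresentation.length_le_of_infix {c d l : List ℤ} {A : Matrix (Fin 2) (Fin 2) ℤ}
    (hc : IsShortestPresentation c A) (hl : l <:+: c) (hd : Mseq d =± Mseq l) :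
    l.length ≤ d.length := by
  obtain ⟨s, t, rfl⟩ := hl
  have := hc.length_le _ ((Mseq_append_append_eqUpToSign hd s t).trans hc.eqUpToSign)
  simpa using this

lemma IsShortestPresentation.ne_of_mem_interior {c : List ℤ} {A : Matrix (Fin 2) (Fin 2) ℤ}
    (hc : IsShortestPresentation c A) {x : ℤ} (hx : x ∈ c.tail.dropLast) :
    x ≠ -1 ∧ x ≠ 0 ∧ x ≠ 1 := by
  obtain ⟨a, b, h⟩ :=
    cons_concat_infix_of_infix_interior (by simp) ((List.singleton_infix_iff x _).2 hx)
  refine ⟨?_, ?_, ?_⟩ <;> rintro rfl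
  · simpa using hc.length_le_of_infix h (EqUpToSign.symm (.inr (Mseq_neg_one_mid a b)))
  · simpa using hc.length_le_of_infix h (EqUpToSign.symm (.inr (Mseq_zero_mid a b)))
  · simpa using hc.length_le_of_infix h (EqUpToSign.symm (.inl (Mseq_one_mid a b)))

/-- The sum of the negative parts of the letters, which decreases when an interior letter `-2` is
replaced by `2`. -/
def negPartSum (l : List ℤ) : ℕ := (l.map fun c => (-c).toNat).sum

lemma exists_negPartSum_lt_of_neg_two_mem_interior {c : List ℤ} (h : -2 ∈ c.tail.dropLast) :
    ∃ d, Mseq d =± Mseq c ∧ d.length = c.length ∧ negPartSum d < negPartSum c := by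
  obtain ⟨a, b, s, t, rfl⟩ :=
    cons_concat_infix_of_infix_interior (by simp) ((List.singleton_infix_iff _ _).2 h)
  refine ⟨s ++ [a + 1, 2, b + 1] ++ t, Mseq_append_append_eqUpToSign (.inr ?_) s t, by simp, ?_⟩
  · simpa using Mseq_two_mid (a + 1) (b + 1)
  · simp only [negPartSum, List.append_assoc, List.cons_append, List.nil_append, List.map_append,
      List.map_cons, neg_add_rev, Int.reduceNeg, Int.reduceToNat, List.sum_append, List.sum_cons,
      zero_add, neg_neg, add_lt_add_iff_left]
    omega

theorem exists_isShortestPresentation_forall_mem_interior {A : Matrix (Fin 2) (Fin 2) ℤ}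
    (hA : A.det = 1) :
    ∃ c, IsShortestPresentation c A ∧ ∀ x ∈ c.tail.dropLast, 2 ≤ x ∨ x ≤ -3 := by
  obtain ⟨c, hcA, hmin⟩ := exists_minimalFor_of_wellFoundedLT (fun c => Mseq c =± A)
    (fun c => toLex (c.length, negPartSum c)) (exists_Mseq_eqUpToSign_coe ⟨A, hA⟩)
  have hle (d) (hd : Mseq d =± A) : c.length < d.length ∨
      c.length = d.length ∧ negPartSum c ≤ negPartSum d :=
    Prod.Lex.toLex_le_toLex.1 ((le_total _ _).elim id (hmin hd))
  have hc : IsShortestPresentation c A :=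
    ⟨hcA, fun d hd => (hle d hd).elim le_of_lt fun h => h.1.le⟩
  refine ⟨c, hc, fun x hx => ?_⟩
  have hx_two : x ≠ -2 := by
    rintro rfl
    obtain ⟨d, hd, hlen, hneg⟩ := exists_negPartSum_lt_of_neg_two_mem_interior hx
    have := hle d (hd.trans hcA)
    omega
  have := hc.ne_of_mem_interior hx
  omega

/-- The word `3, …, 3, 2` with `k` letters `3`. -/
def threesTwo (k : ℕ) : List ℤ := List.replicate k 3 ++ [2]

lemma threesTwo_succ (k : ℕ) : threesTwo (k + 1) = 3 :: threesTwo k := by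
  simp [threesTwo, List.replicate_succ]

/-- Words with letters outside `{-2, -1, 0, 1}` and without a factor `2, 3, …, 3, 2`: the interiors
of the minimal presentations in normal form. -/
structure IsReducedWord (l : List ℤ) : Prop where
  two_le_or_le : ∀ x ∈ l, 2 ≤ x ∨ x ≤ -3
  not_infix : ∀ k, ¬ 2 :: threesTwo k <:+: l

lemma IsReducedWord.of_cons {c : ℤ} {l : List ℤ} (h : IsReducedWord (c :: l)) : IsReducedWord l :=
  ⟨fun x hx => h.two_le_or_le x (List.mem_cons_of_mem c hx),
    fun k hk => h.not_infix k (List.infix_cons hk)⟩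

lemma IsReducedWord.not_prefix {l : List ℤ} (h : IsReducedWord (2 :: l)) (k : ℕ) :
    ¬ threesTwo k <+: l :=
  fun hk => h.not_infix k ((List.prefix_cons_inj 2).2 hk).isInfix

lemma Mseq_two_threesTwo_mid (a b : ℤ) (k : ℕ) :
    Mseq (a :: (2 :: threesTwo k ++ [b])) =±
      Mseq ((a - 1) :: (List.replicate (k + 1) (-3) ++ [b - 1])) := by
  induction k generalizing a with
  | zero =>
    have h₁ : Mseq [a, 2, 2, b] =± Mseq [a - 1, -2, 1, b] :=
      Mseq_append_append_eqUpToSign (.inr (Mseq_two_mid a 2)) [] [b]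
    have h₂ : Mseq [a - 1, -2, 1, b] =± Mseq [a - 1, -3, b - 1] :=
      Mseq_append_append_eqUpToSign (.inl (Mseq_one_mid (-2) b)) [a - 1] []
    exact h₁.trans h₂
  | succ k ih =>
    have h₁ : Mseq (a :: 2 :: 3 :: (threesTwo k ++ [b])) =±
        Mseq ((a - 1) :: -2 :: 2 :: (threesTwo k ++ [b])) :=
      Mseq_append_append_eqUpToSign (.inr (Mseq_two_mid a 3)) [] (threesTwo k ++ [b])
    have h₂ : Mseq ((a - 1) :: -2 :: 2 :: (threesTwo k ++ [b])) =±
        Mseq ((a - 1) :: -3 :: (List.replicate (k + 1) (-3) ++ [b - 1])) := by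
      simpa using Mseq_append_append_eqUpToSign (ih (-2)) [a - 1] []
    exact h₁.trans h₂

theorem IsShortestPresentation.isReducedWord_interior {c : List ℤ} {A : Matrix (Fin 2) (Fin 2) ℤ}
    (hc : IsShortestPresentation c A) (h : ∀ x ∈ c.tail.dropLast, 2 ≤ x ∨ x ≤ -3) :
    IsReducedWord c.tail.dropLast := by
  refine ⟨h, fun k hk => ?_⟩
  obtain ⟨a, b, hab⟩ := cons_concat_infix_of_infix_interior (by simp) hk
  have := hc.length_le_of_infix hab (Mseq_two_threesTwo_mid a b k).symm
  simp [threesTwo] at this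

/-- The negative continued fraction `1 / (c₁ - 1 / (c₂ - ⋯))`, with value `0` for the empty
sequence. A vanishing denominator gives `0`; this does not happen for reduced words. -/
noncomputable def contFrac : List ℤ → ℝ
  | [] => 0
  | c :: l => (c - contFrac l)⁻¹

lemma inv_lt_goldenRatio_sub_one {x : ℝ} (hx : φ < x) : x⁻¹ < φ - 1 := by
  have h := inv_strictAnti₀ Real.goldenRatio_pos hx
  linarith [Real.inv_goldenRatio, Real.goldenRatio_add_goldenConj]

lemma inv_goldenRatio_add_one : (φ + 1)⁻¹ = 2 - φ := by
  refine inv_eq_of_mul_eq_one_right ?_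
  linear_combination -Real.goldenRatio_sq

lemma inv_lt_two_sub_goldenRatio {x : ℝ} (hx : φ + 1 < x) : x⁻¹ < 2 - φ := by
  rw [← inv_goldenRatio_add_one]
  exact inv_strictAnti₀ (by linarith [Real.goldenRatio_pos]) hx

lemma goldenRatio_sub_two_lt_inv {x : ℝ} (hx : x < -(φ + 1)) : φ - 2 < x⁻¹ := by
  have := inv_lt_two_sub_goldenRatio (lt_neg_of_lt_neg hx)
  rw [inv_neg] at this
  linarith

lemma goldenRatio_add_lt_sub {n c : ℤ} {r : ℝ} (hc : n ≤ c) (hr : r < φ - 1)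
    (hr' : c = n → r < 2 - φ) : φ + (n - 2) < c - r := by
  rcases hc.eq_or_lt with rfl | hc
  · linarith [hr' rfl]
  · have : (n + 1 : ℝ) ≤ c := by exact_mod_cast hc
    linarith [Real.goldenRatio_lt_two]

lemma contFrac_bounds {l : List ℤ} (hl : IsReducedWord l) :
    contFrac l ∈ Set.Ioo (φ - 2) (φ - 1) ∧
      ((∀ k, ¬ threesTwo k <+: l) → contFrac l < 2 - φ) := by
  have hφ_one := Real.one_lt_goldenRatio
  have hφ_two := Real.goldenRatio_lt_two
  induction l with
  | nil => simp [contFrac, hφ_one, hφ_two]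
  | cons c l ih =>
    obtain ⟨⟨hlower, hupper⟩, hsharp⟩ := ih hl.of_cons
    rw [contFrac]
    rcases hl.two_le_or_le c (by simp) with hc | hc
    · have hlt : φ < c - contFrac l := by
        simpa using goldenRatio_add_lt_sub hc hupper (by rintro rfl; exact hsharp hl.not_prefix)
      have hpos : 0 < (c - contFrac l)⁻¹ := inv_pos.2 (by linarith)
      refine ⟨⟨by linarith, inv_lt_goldenRatio_sub_one hlt⟩, fun hpre => ?_⟩
      have hc_two : c ≠ 2 := by
        rintro rfl
        exact hpre 0 (by simp [threesTwo])
      have hlt' := goldenRatio_add_lt_sub (show 3 ≤ c by omega) hupper <| by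
        rintro rfl
        exact hsharp fun k hk => hpre (k + 1) (by simpa [threesTwo_succ] using hk)
      push_cast at hlt'
      exact inv_lt_two_sub_goldenRatio (by linarith)
    · have : (c : ℝ) ≤ -3 := by exact_mod_cast hc
      have hneg : (c - contFrac l)⁻¹ < 0 := inv_lt_zero.2 (by linarith)
      exact ⟨⟨goldenRatio_sub_two_lt_inv (by linarith), by linarith⟩, fun _ => by linarith⟩

lemma sub_contFrac_ne_zero {c : ℤ} {l : List ℤ} (h : IsReducedWord (c :: l)) :
    (c - contFrac l : ℝ) ≠ 0 := by
  obtain ⟨⟨hlower, hupper⟩, -⟩ := contFrac_bounds h.of_cons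
  have := Real.one_lt_goldenRatio
  have := Real.goldenRatio_lt_two
  rcases h.two_le_or_le c (by simp) with hc | hc
  · have : (2 : ℝ) ≤ c := by exact_mod_cast hc
    linarith
  · have : (c : ℝ) ≤ -3 := by exact_mod_cast hc
    linarith

lemma eq_of_sub_contFrac_eq {a a' : ℤ} {l l' : List ℤ} (hl : IsReducedWord l)
    (hl' : IsReducedWord l') (h : (a - contFrac l : ℝ) = a' - contFrac l') :
    a = a' ∧ contFrac l = contFrac l' := by
  obtain ⟨⟨hlower, hupper⟩, -⟩ := contFrac_bounds hl
  obtain ⟨⟨hlower', hupper'⟩, -⟩ := contFrac_bounds hl'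
  have hlt : a < a' + 1 := by exact_mod_cast (by linarith : (a : ℝ) < a' + 1)
  have hlt' : a' < a + 1 := by exact_mod_cast (by linarith : (a' : ℝ) < a + 1)
  obtain rfl : a = a' := by omega
  exact ⟨rfl, by linarith⟩

theorem contFrac_injOn : Set.InjOn contFrac {l | IsReducedWord l} := by
  intro l hl l' hl' h
  induction l generalizing l' with
  | nil =>
    cases l' with
    | nil => rfl
    | cons c' l' => exact absurd h.symm (inv_ne_zero (sub_contFrac_ne_zero hl'))
  | cons c l ih =>
    cases l' with
    | nil => exact absurd h (inv_ne_zero (sub_contFrac_ne_zero hl))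
    | cons c' l' =>
      obtain ⟨rfl, htail⟩ := eq_of_sub_contFrac_eq hl.of_cons hl'.of_cons (inv_injective h)
      rw [ih hl.of_cons hl'.of_cons htail]

lemma contFrac_mul_Mseq {l : List ℤ} (hl : IsReducedWord l) :
    contFrac l * Mseq l 0 0 = Mseq l 1 0 := by
  induction l with
  | nil => simp [contFrac, Mseq_nil]
  | cons c l ih =>
    rw [contFrac, inv_mul_eq_iff_eq_mul₀ (sub_contFrac_ne_zero hl), Mseq_cons_zero_apply,
      Mseq_cons_one_apply, Int.cast_sub, Int.cast_mul, ← ih hl.of_cons, sub_mul]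

lemma Mseq_zero_zero_ne_zero {l : List ℤ} (hl : IsReducedWord l) : (Mseq l 0 0 : ℝ) ≠ 0 := by
  induction l with
  | nil => simp [Mseq_nil]
  | cons c l ih =>
    rw [Mseq_cons_zero_apply, Int.cast_sub, Int.cast_mul, ← contFrac_mul_Mseq hl.of_cons, ← sub_mul]
    exact mul_ne_zero (sub_contFrac_ne_zero hl) (ih hl.of_cons)

lemma Mseq_zero_one_div_one_one (a b : ℤ) {l : List ℤ} (hl : IsReducedWord l) :
    (Mseq (a :: (l ++ [b])) 0 1 / Mseq (a :: (l ++ [b])) 1 1 : ℝ) = a - contFrac l := by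
  have := Mseq_zero_zero_ne_zero hl
  simp only [Mseq_cons_zero_apply, Mseq_cons_one_apply, Mseq_concat_apply_one, Int.cast_sub,
    Int.cast_mul, Int.cast_neg, ← contFrac_mul_Mseq hl]
  field_simp
  ring

theorem eq_of_Mseq_eqUpToSign_of_isReducedWord {a b a' b' : ℤ} {l l' : List ℤ}
    (hl : IsReducedWord l) (hl' : IsReducedWord l')
    (h : Mseq (a :: (l ++ [b])) =± Mseq (a' :: (l' ++ [b']))) :
    a :: (l ++ [b]) = a' :: (l' ++ [b']) := by
  have hquot : (a - contFrac l : ℝ) = a' - contFrac l' := by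
    rw [← Mseq_zero_one_div_one_one a b hl, ← Mseq_zero_one_div_one_one a' b' hl']
    exact h.apply_div_apply_eq 0 1 1 1
  obtain ⟨rfl, hfrac⟩ := eq_of_sub_contFrac_eq hl hl' hquot
  obtain rfl := contFrac_injOn hl hl' hfrac
  rw [← List.cons_append, ← List.cons_append, Mseq_append, Mseq_append] at h
  have hb := h.of_mul_left (isUnit_Mseq _).isRegular.left
  obtain rfl : b = b' := eq_of_M_eqUpToSign (by simpa [Mseq] using hb)
  rfl

theorem eq_of_Mseq_eqUpToSign {c d : List ℤ} (hlen : c.length = d.length)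
    (hc : IsReducedWord c.tail.dropLast) (hd : IsReducedWord d.tail.dropLast)
    (h : Mseq c =± Mseq d) : c = d := by
  match c, d, hlen with
  | [], [], _ => rfl
  | [a], [b], _ =>
    obtain rfl : a = b := eq_of_M_eqUpToSign (by simpa [Mseq] using h)
    rfl
  | a :: x :: l, a' :: x' :: l', _ =>
    rw [← List.dropLast_concat_getLast (List.cons_ne_nil x l),
      ← List.dropLast_concat_getLast (List.cons_ne_nil x' l')] at h ⊢
    exact eq_of_Mseq_eqUpToSign_of_isReducedWord hc hd h

/-- For every `A ∈ SL(2,ℤ)` there is exactly one sequence `(c₁,…,cₙ)` of integers such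
that (i) `M(c₁,…,cₙ) = ε·A` for some `ε ∈ {1,−1}`, (ii) `n` is minimal among all such
presentations up to sign, and (iii) `cᵢ ∉ {−2,−1,0,1}` for all `2 ≤ i ≤ n−1`. -/
theorem minimal_presentation_existsUnique (A : Matrix (Fin 2) (Fin 2) ℤ) (hA : A.det = 1) :
    ∃! c : List ℤ,
      (∃ ε : ℤ, (ε = 1 ∨ ε = -1) ∧ Mseq c = ε • A) ∧
      (∀ d : List ℤ, (∃ ε' : ℤ, (ε' = 1 ∨ ε' = -1) ∧ Mseq d = ε' • A) →
        c.length ≤ d.length) ∧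
      (∀ i, 1 ≤ i → i + 1 < c.length →
        c.getD i 0 ≠ -2 ∧ c.getD i 0 ≠ -1 ∧ c.getD i 0 ≠ 0 ∧ c.getD i 0 ≠ 1) := by
  simp only [← EqUpToSign.iff_exists_smul, forall_getD_ne_iff_forall_mem_interior]
  obtain ⟨c, hc, hcint⟩ := exists_isShortestPresentation_forall_mem_interior hA
  refine ⟨c, ⟨hc.eqUpToSign, hc.length_le, hcint⟩, ?_⟩
  rintro d ⟨hdA, hdmin, hdint⟩
  have hd : IsShortestPresentation d A := ⟨hdA, hdmin⟩
  exact eq_of_Mseq_eqUpToSign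
    (le_antisymm (hd.length_le c hc.eqUpToSign) (hc.length_le d hd.eqUpToSign))
    (hd.isReducedWord_interior hdint) (hc.isReducedWord_interior hcint)
    (hd.eqUpToSign.trans hc.eqUpToSign.symm)
end
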